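/- Let {f_t}_{t∈[0,1]} be a family of germs of C^∞ functions (ℝ^n,0) → (ℝ,0) that is R-C^1 trivial, and suppose that f_0 has finite order and its initial part in(f_0) has an algebraically isolated singularity at the origin, i.e. μ(in(f_0)) < +∞. Then μ(f_t) = μ(f_0) for all t ∈ [0,1]. -/

import Mathlib

open Filter Set Metric Topology Asymptotics

noncomputable section

set_option synthInstance.maxHeartbeats 1000000

/-- `ℝ^n` with the Euclidean structure. -/
abbrev Eucl (n : ℕ) : Type := EuclideanSpace ℝ (Fin n)

variable {V W : Type*} [NormedAddCommGroup V] [NormedSpace ℝ V]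
  [NormedAddCommGroup W] [NormedSpace ℝ W]

/-- `F` admits the `α`-derivative `H` at `x`:  `H` is continuous and for every direction `v`,
`F (x + t v) - F x = t ^ α • H v + o(t ^ α)` as `t → 0⁺`. -/
def HasAlphaDerivAt (F : V → W) (x : V) (α : ℝ) (H : V → W) : Prop :=
  Continuous H ∧ ∀ v : V,
    Tendsto (fun t : ℝ => (t ^ α)⁻¹ • (F (x + t • v) - F x - t ^ α • H v))
      (𝓝[>] (0 : ℝ)) (𝓝 0)

/-- `F` has order `α` at `x`: for every nonzero direction `v` the limit of
`F (x + t v) / t ^ α` as `t → 0⁺` exists, and for at least one `v` it is nonzero. -/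
def HasOrderAt (F : V → W) (x : V) (α : ℝ) : Prop :=
  (∀ v : V, v ≠ 0 → ∃ L : W,
      Tendsto (fun t : ℝ => (t ^ α)⁻¹ • F (x + t • v)) (𝓝[>] (0 : ℝ)) (𝓝 L)) ∧
  ∃ v : V, v ≠ 0 ∧ ∃ L : W, L ≠ 0 ∧
      Tendsto (fun t : ℝ => (t ^ α)⁻¹ • F (x + t • v)) (𝓝[>] (0 : ℝ)) (𝓝 L)

/-- `φ` is a lipeomorphism from `U` onto `V'`. -/
def IsLipeoOn (φ : V → W) (U : Set V) (V' : Set W) : Prop :=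
  Set.BijOn φ U V' ∧ ∃ c : ℝ, 1 ≤ c ∧ ∀ x ∈ U, ∀ y ∈ U,
    (1 / c) * ‖x - y‖ ≤ ‖φ x - φ y‖ ∧ ‖φ x - φ y‖ ≤ c * ‖x - y‖

/-- `d` is a pseudo-Lipschitz derivative of `φ` at `x`: along some sequence `t_j → 0⁺`,
`(φ (x + t_j v) - φ x) / t_j → d v` uniformly on compact sets. -/
def IsPseudoLipDerivAt (φ : V → V) (x : V) (d : V → V) : Prop :=
  ∃ t : ℕ → ℝ, (∀ j, 0 < t j) ∧ Tendsto t atTop (𝓝 (0 : ℝ)) ∧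
    ∀ K : Set V, IsCompact K →
      TendstoUniformlyOn (fun j v => (t j)⁻¹ • (φ (x + t j • v) - φ x)) d atTop K

/-- `F ∼ G` at `x₀`: asymptotic equivalence of `F` and `G` at `x₀`. -/
def AsympEquivAt (F G : V → W) (x₀ : V) : Prop :=
  ∃ c₁ c₂ : ℝ, 0 < c₁ ∧ 0 < c₂ ∧
    ∀ᶠ x in 𝓝 x₀, c₂ * ‖F x‖ ≤ ‖G x‖ ∧ ‖G x‖ ≤ c₁ * ‖F x‖

/-- `F ≈ G` at `x₀` via the lipeomorphism `φ`. -/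
def AsympLipEquivAtVia {V' : Type*} [NormedAddCommGroup V'] [NormedSpace ℝ V']
    (F : V → W) (G : V' → W) (φ : V → V') (x₀ : V) : Prop :=
  ∃ c : ℝ, 1 ≤ c ∧ ∀ᶠ x in 𝓝 x₀,
    (1 / c) * ‖F x - F x₀‖ ≤ ‖G (φ x) - G (φ x₀)‖ ∧
      ‖G (φ x) - G (φ x₀)‖ ≤ c * ‖F x - F x₀‖

/-- The degree-`m` term of the Taylor series of `F` at `0`; for a `C^∞` germ of
finite order `m` this is its initial part `in(F)`. -/
def inPart (F : V → ℝ) (m : ℕ) : V → ℝ :=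
  fun x => (m.factorial : ℝ)⁻¹ • iteratedFDeriv ℝ m F 0 (fun _ => x)

instance {α : Type*} (l : Filter α) {R : Type*} [CommSemiring R] :
    Algebra R (Filter.Germ l R) :=
  Algebra.ofModule
    (fun r x y => Filter.Germ.inductionOn₂ x y fun f g => by
      rw [← Filter.Germ.coe_smul, ← Filter.Germ.coe_mul, ← Filter.Germ.coe_mul,
        ← Filter.Germ.coe_smul, smul_mul_assoc])
    (fun r x y => Filter.Germ.inductionOn₂ x y fun f g => by
      rw [← Filter.Germ.coe_smul, ← Filter.Germ.coe_mul, ← Filter.Germ.coe_mul,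
        ← Filter.Germ.coe_smul, mul_smul_comm])

/-- `E_n`: the ℝ-algebra of germs at `0` of `C^∞` functions `ℝ^n → ℝ`, realized as a
subalgebra of the algebra of germs at `0` of functions `ℝ^n → ℝ`. -/
def smoothGerms (n : ℕ) : Subalgebra ℝ (Filter.Germ (𝓝 (0 : Eucl n)) ℝ) where
  carrier := {γ | ∃ f : Eucl n → ℝ, ContDiff ℝ (⊤ : ℕ∞) f ∧ γ = ↑f}
  add_mem' := by
    rintro a b ⟨f, hf, rfl⟩ ⟨g, hg, rfl⟩
    exact ⟨f + g, hf.add hg, rfl⟩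
  mul_mem' := by
    rintro a b ⟨f, hf, rfl⟩ ⟨g, hg, rfl⟩
    exact ⟨f * g, hf.mul hg, rfl⟩
  algebraMap_mem' := fun r => ⟨fun _ => r, contDiff_const, by
    rw [Algebra.algebraMap_eq_smul_one, ← Filter.Germ.coe_one, ← Filter.Germ.coe_smul]
    congr 1
    funext x
    simp⟩

/-- The Jacobian ideal `J(f) ⊆ E_n`, generated by the germs at `0` of the partial
derivatives `∂f/∂x_1, …, ∂f/∂x_n`. -/
def jacobianIdeal (n : ℕ) (f : Eucl n → ℝ) : Ideal (smoothGerms n) :=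
  Ideal.span {γ | ∃ i : Fin n,
    (γ : Filter.Germ (𝓝 (0 : Eucl n)) ℝ) =
      ↑(fun x => fderiv ℝ f x (EuclideanSpace.single i 1))}

/-- The real Milnor number `μ(f) = dim_ℝ E_n / J(f)`, as a cardinal. -/
def milnor (n : ℕ) (f : Eucl n → ℝ) : Cardinal :=
  Module.rank ℝ (smoothGerms n ⧸ jacobianIdeal n f)

/-- `φ` is a germ at `0` of a `C^k` diffeomorphism `(ℝ^n, 0) → (ℝ^n, 0)`. -/
def IsCkDiffeoGermAt {n : ℕ} (k : ℕ∞) (φ : Eucl n → Eucl n) : Prop :=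
  φ 0 = 0 ∧ ∃ U V : Set (Eucl n), IsOpen U ∧ IsOpen V ∧ 0 ∈ U ∧ 0 ∈ V ∧
    Set.BijOn φ U V ∧ ContDiffOn ℝ k φ U ∧ ∃ ψ : Eucl n → Eucl n,
      ContDiffOn ℝ k ψ V ∧ (∀ x ∈ U, ψ (φ x) = x) ∧ ∀ y ∈ V, φ (ψ y) = y

/-!
A map `φ` with invertible derivative `A` at `0` is `A` up to `o(‖x‖)`, so `f ∘ φ ∘ A⁻¹` has the same
initial part as `f`. As `μ` is invariant under linear changes of coordinates, it is enough that
`μ(f)` depends only on `p = in(f)` when `μ(p) < ∞`, namely that `μ(f) = μ(p)`.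

Let `𝔪` be the maximal ideal of `E_n` and `d + 1` the order of `f`. The partial derivatives of `f`
agree modulo `𝔪 ^ (d + 1)` with those of `p`, which are forms `g_1, …, g_n` of degree `d`. Since
`J(p)` contains a power of `𝔪`, so does the ideal of `ℝ[x_1, …, x_n]` generated by the `g_i`, and by
the Cohen–Macaulay property `n` generic linear combinations of the `g_i` form a regular sequence;
hence the `g_i` have only Koszul syzygies. Those lift to syzygies of the `∂f/∂x_i`, so an element of
`J(f)` of order `j` is a combination of the `∂f/∂x_i` with coefficients of order at least `j - d`.
Its leading form is therefore that of an element of `J(p)`, and symmetrically: `J(f)` and `J(p)`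
have the same image in the graded ring of `E_n`, and the quotients have the same dimension.
-/

section Depth

open RingTheory.Sequence CategoryTheory Abelian

universe u

variable {R : Type u} [CommRing R]

theorem subsingleton_ext_congr (N : ModuleCat.{u} R) {M M' : Type u} [AddCommGroup M]
    [Module R M] [AddCommGroup M'] [Module R M'] (e : M ≃ₗ[R] M') (i : ℕ) :
    Subsingleton (Ext N (ModuleCat.of R M) i) ↔ Subsingleton (Ext N (ModuleCat.of R M') i) :=
  ((extFunctorObj N i).mapIso e.toModuleIso).addCommGroupIsoToAddEquiv.toEquiv.subsingleton_congr

theorem subsingleton_ext_quotient_ofList (N : ModuleCat.{u} R) (zs : List R) {k : ℕ} :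
    ∀ (M : Type u) [AddCommGroup M] [Module R M], IsWeaklyRegular M zs →
      (∀ i < k + zs.length, Subsingleton (Ext N (ModuleCat.of R M) i)) →
      ∀ i < k, Subsingleton
        (Ext N (ModuleCat.of R (M ⧸ (Ideal.ofList zs • ⊤ : Submodule R M))) i) := by
  induction zs with
  | nil =>
    intro M _ _ _ hM i hi
    let e := Submodule.quotEquivOfEqBot (Ideal.ofList ([] : List R) • ⊤ : Submodule R M) (by simp)
    exact (subsingleton_ext_congr N e i).2 (hM i (by simpa using hi))
  | cons z zs ih =>
    intro M _ _ hz hM i hi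
    obtain ⟨hz, hzs⟩ := (isWeaklyRegular_cons_iff M z zs).1 hz
    have hM' : ∀ i < k + zs.length,
        Subsingleton (Ext N (ModuleCat.of R (QuotSMulTop z M)) i) := fun j hj ↦
      AddCommGrpCat.subsingleton_of_isZero <| ShortComplex.Exact.isZero_of_both_zeros
        (Ext.covariant_sequence_exact₃' N
          (IsSMulRegular.smulShortComplex_shortExact (M := ModuleCat.of R M) hz) j (j + 1) rfl)
        ((AddCommGrpCat.isZero_of_iff_subsingleton.2
          (hM j (by rw [List.length_cons]; omega))).eq_zero_of_src _)
        ((AddCommGrpCat.isZero_of_iff_subsingleton.2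
          (hM (j + 1) (by rw [List.length_cons]; omega))).eq_zero_of_tgt _)
    exact (subsingleton_ext_congr N
      (Submodule.quotOfListConsSMulTopEquivQuotSMulTopInner M z zs) i).2
      (ih (QuotSMulTop z M) hzs hM' i hi)

theorem exists_isSMulRegular_quotient_ofList [IsNoetherianRing R] {M : Type u} [AddCommGroup M]
    [Module R M] [Module.Finite R M] {I : Ideal R} (hI : I • (⊤ : Submodule R M) < ⊤)
    {zs ws : List R} (hlen : zs.length < ws.length) (hz : IsWeaklyRegular M zs)
    (hw : IsRegular M ws) (hwI : ∀ w ∈ ws, w ∈ I) :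
    ∃ r ∈ I, IsSMulRegular (M ⧸ (Ideal.ofList zs • ⊤ : Submodule R M)) r := by
  have hExt : ∀ i < ws.length, Subsingleton (Ext (ModuleCat.of R (R ⧸ I)) (ModuleCat.of R M) i) :=
    ModuleCat.subsingleton_ext_of_exists_isRegular I (ModuleCat.of R (R ⧸ I))
      (by simp [Module.support_eq_zeroLocus, Ideal.annihilator_quotient])
      (ModuleCat.of R M) hI ws hwI hw
  have hExt₀ := subsingleton_ext_quotient_ofList (ModuleCat.of R (R ⧸ I)) zs (k := 1) M hz
    (fun i hi ↦ hExt i (by omega)) 0 one_pos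
  have hHom : Subsingleton (R ⧸ I →ₗ[R] M ⧸ (Ideal.ofList zs • ⊤ : Submodule R M)) :=
    (Ext.addEquiv₀.trans (ModuleCat.homAddEquiv (M := ModuleCat.of R (R ⧸ I)) (N :=
      ModuleCat.of R (M ⧸ (Ideal.ofList zs • ⊤ : Submodule R M))))).symm.subsingleton
  simpa [Ideal.annihilator_quotient] using IsSMulRegular.subsingleton_linearMap_iff.1 hHom

end Depth

section GenericRegularSequence

open RingTheory.Sequence

universe u

variable {𝕜 : Type*} {R : Type u} {W' : Type*} [Field 𝕜] [CommRing R] [IsNoetherianRing R]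
  [Algebra 𝕜 R] [AddCommGroup W'] [Module 𝕜 W']

theorem exists_isSMulRegular_apply [Infinite 𝕜] {N : Type*} [AddCommGroup N] [Module R N]
    [Module.Finite R N] {I : Ideal R} (L : W' →ₗ[𝕜] R) {k : ℕ}
    (hL : I ^ k ≤ Ideal.span (Set.range L)) (hI : ∃ r ∈ I, IsSMulRegular N r) :
    ∃ c, IsSMulRegular N (L c) := by
  classical
  obtain ⟨r, hrI, hr⟩ := hI
  have hcompl := biUnion_associatedPrimes_eq_compl_regular R N
  let S : Finset (Subspace 𝕜 W') := (associatedPrimes.finite R N).toFinset.image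
    fun p ↦ (p.restrictScalars 𝕜).comap L
  have hS : ⊤ ∉ S := by
    intro htop
    obtain ⟨p, hp, hpL⟩ := Finset.mem_image.1 htop
    rw [Set.Finite.mem_toFinset] at hp
    have hspan : Ideal.span (Set.range L) ≤ p :=
      Ideal.span_le.2 (Set.range_subset_iff.2 fun w ↦ by
        have : w ∈ (p.restrictScalars 𝕜).comap L := hpL ▸ Submodule.mem_top
        exact this)
    have : p.IsPrime := IsAssociatedPrime.isPrime hp
    have hrp : r ∈ ⋃ q ∈ associatedPrimes R N, (q : Set R) :=
      Set.mem_biUnion hp (Ideal.IsPrime.le_of_pow_le (hL.trans hspan) hrI)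
    exact (hcompl.subset hrp) hr
  obtain ⟨c, hc⟩ := (Set.ne_univ_iff_exists_notMem _).1 (Subspace.biUnion_ne_univ_of_top_notMem hS)
  refine ⟨c, by_contra fun hcN ↦ hc ?_⟩
  have hcp : L c ∈ ⋃ q ∈ associatedPrimes R N, (q : Set R) := hcompl.superset hcN
  obtain ⟨p, hp, hcp⟩ := Set.mem_iUnion₂.1 hcp
  exact Set.mem_biUnion (Finset.mem_image_of_mem _ ((Set.Finite.mem_toFinset _).2 hp)) hcp

theorem isWeaklyRegular_concat_iff {R : Type*} [CommRing R] {rs : List R} {r : R} :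
    IsWeaklyRegular R (rs ++ [r]) ↔
      IsWeaklyRegular R rs ∧ ∀ x, r * x ∈ Ideal.ofList rs → x ∈ Ideal.ofList rs := by
  rw [isWeaklyRegular_append_iff, isWeaklyRegular_singleton_iff,
    isSMulRegular_quotient_iff_mem_of_smul_mem]
  simp

theorem linearIndependent_snoc_of_isWeaklyRegular {R : Type*} [CommRing R] [Algebra 𝕜 R]
    (L : W' →ₗ[𝕜] R) {r : ℕ} {c : Fin r → W'} {a : W'} (hc : LinearIndependent 𝕜 c)
    (hne : Ideal.ofList (List.ofFn (L ∘ c)) ≠ ⊤)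
    (hreg : IsWeaklyRegular R (List.ofFn (L ∘ c) ++ [L a])) :
    LinearIndependent 𝕜 (Fin.snoc c a : Fin (r + 1) → W') := by
  refine linearIndependent_finSnoc.2 ⟨hc, fun ha ↦ hne ?_⟩
  have hspan : Submodule.span 𝕜 (Set.range c) ≤
      ((Ideal.ofList (List.ofFn (L ∘ c))).restrictScalars 𝕜).comap L :=
    Submodule.span_le.2 (Set.range_subset_iff.2 fun i ↦
      Ideal.subset_span ((List.mem_ofFn' (L ∘ c) _).2 ⟨i, rfl⟩))
  exact (Ideal.eq_top_iff_one _).2 ((isWeaklyRegular_concat_iff.1 hreg).2 1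
    (by simpa using hspan ha))

theorem exists_linearIndependent_isWeaklyRegular [Infinite 𝕜] {I : Ideal R} (hI : I ≠ ⊤)
    (L : W' →ₗ[𝕜] R) (hLI : ∀ c, L c ∈ I) {k : ℕ} (hL : I ^ k ≤ Ideal.span (Set.range L))
    {ws : List R} (hw : IsRegular R ws) (hwI : ∀ w ∈ ws, w ∈ I) {r : ℕ} (hr : r ≤ ws.length) :
    ∃ c : Fin r → W', LinearIndependent 𝕜 c ∧ IsWeaklyRegular R (List.ofFn (L ∘ c)) := by
  induction r with
  | zero => exact ⟨Fin.elim0, linearIndependent_empty_type, by simp⟩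
  | succ r ih =>
    obtain ⟨c, hc, hreg⟩ := ih (by omega)
    obtain ⟨a, ha⟩ := exists_isSMulRegular_apply L hL
      (exists_isSMulRegular_quotient_ofList (by simpa using hI.lt_top) (by simpa using hr)
        hreg hw hwI)
    have hreg' : IsWeaklyRegular R (List.ofFn (L ∘ c) ++ [L a]) :=
      (isWeaklyRegular_append_iff R _ _).2 ⟨hreg, (isWeaklyRegular_singleton_iff _ _).2 ha⟩
    have hne : Ideal.ofList (List.ofFn (L ∘ c)) ≠ ⊤ := ne_top_of_le_ne_top hI <|
      Ideal.span_le.2 fun x hx ↦ by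
        obtain ⟨i, rfl⟩ := (List.mem_ofFn' (L ∘ c) x).1 hx
        exact hLI (c i)
    refine ⟨Fin.snoc c a, linearIndependent_snoc_of_isWeaklyRegular L hc hne hreg', ?_⟩
    rw [List.ofFn_succ', List.concat_eq_append]
    simpa [Function.comp_def] using hreg'

end GenericRegularSequence

section Syzygies

open RingTheory.Sequence Matrix

variable {R κ : Type*} [CommRing R] [Fintype κ]

/-- Every linear relation between the `g i` is a combination of the Koszul relations
`g j * g i - g i * g j = 0`: this is the vanishing of the first Koszul homology of `g`. The
antisymmetric matrix of coefficients is presented as `c - cᵀ`. -/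
def HasKoszulSyzygies (g : κ → R) : Prop :=
  ∀ α : κ → R, α ⬝ᵥ g = 0 → ∃ c : Matrix κ κ R, α = (c - cᵀ) *ᵥ g

theorem dotProduct_sub_transpose_mulVec (f : κ → R) (c : Matrix κ κ R) :
    ((c - cᵀ) *ᵥ f) ⬝ᵥ f = 0 := by
  rw [sub_mulVec, sub_dotProduct, mulVec_transpose, ← dotProduct_mulVec, dotProduct_comm, sub_self]

theorem hasKoszulSyzygies_of_isUnit {g : κ → R} {k : κ} (hk : IsUnit (g k)) :
    HasKoszulSyzygies g := by
  classical
  obtain ⟨u, hu⟩ := hk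
  refine fun α hα ↦ ⟨vecMulVec α (Pi.single k ↑u⁻¹), ?_⟩
  rw [sub_mulVec, transpose_vecMulVec, vecMulVec_mulVec, vecMulVec_mulVec, hα]
  simp [← hu]

theorem hasKoszulSyzygies_of_mulVec [DecidableEq κ] {g : κ → R} {P : Matrix κ κ R}
    (hP : IsUnit P) (h : HasKoszulSyzygies (P *ᵥ g)) : HasKoszulSyzygies g := by
  intro α hα
  obtain ⟨Q, -, hQP⟩ := isUnit_iff_exists.1 hP
  obtain ⟨c, hc⟩ := h (α ᵥ* Q) (by rw [← dotProduct_mulVec, mulVec_mulVec, hQP, one_mulVec, hα])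
  refine ⟨Pᵀ * c * P, ?_⟩
  calc α = Pᵀ *ᵥ (α ᵥ* Q) := by rw [mulVec_transpose, vecMul_vecMul, hQP, vecMul_one]
    _ = (Pᵀ * (c - cᵀ) * P) *ᵥ g := by rw [hc, mulVec_mulVec, mulVec_mulVec]
    _ = (Pᵀ * c * P - (Pᵀ * c * P)ᵀ) *ᵥ g := by
      simp only [transpose_mul, transpose_transpose, mul_sub, sub_mul, mul_assoc]

theorem hasKoszulSyzygies_of_isWeaklyRegular {r : ℕ} {g : Fin r → R}
    (h : IsWeaklyRegular R (List.ofFn g)) : HasKoszulSyzygies g := by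
  induction r with
  | zero => exact fun α _ ↦ ⟨0, Subsingleton.elim _ _⟩
  | succ r ih =>
    intro α hα
    rw [List.ofFn_succ', List.concat_eq_append, isWeaklyRegular_concat_iff] at h
    obtain ⟨hinit, hlast⟩ := h
    have hspan : Ideal.ofList (List.ofFn fun i : Fin r ↦ g i.castSucc) =
        Ideal.span (Set.range fun i : Fin r ↦ g i.castSucc) := by
      simp [Ideal.ofList, List.mem_ofFn', Set.range]
    rw [dotProduct, Fin.sum_univ_castSucc] at hα
    obtain ⟨b, hb⟩ := Ideal.mem_span_range_iff_exists_fun.1 (hspan ▸ hlast (α (Fin.last r)) (by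
      rw [hspan, mul_comm, ← neg_eq_of_add_eq_zero_right hα]
      exact neg_mem (Ideal.sum_mem _ fun i _ ↦
        Ideal.mul_mem_left _ _ (Ideal.subset_span ⟨i, rfl⟩))))
    obtain ⟨c, hc⟩ := ih hinit (fun i ↦ α i.castSucc + b i * g (Fin.last r)) (by
      rw [← hα, ← hb, Finset.sum_mul, ← Finset.sum_add_distrib]
      exact Finset.sum_congr rfl fun i _ ↦ by ring)
    refine ⟨of (Fin.snoc (fun i ↦ Fin.snoc (c i) 0) (Fin.snoc b 0)), funext fun i ↦ ?_⟩
    induction i using Fin.lastCases with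
    | last => simp [mulVec, dotProduct, Fin.sum_univ_castSucc, hb]
    | cast i =>
      have hi := congrFun hc i
      simp only [mulVec, dotProduct, Matrix.sub_apply, transpose_apply] at hi
      simp [mulVec, dotProduct, Fin.sum_univ_castSucc, ← hi]

end Syzygies

section Forms

open MvPolynomial RingTheory.Sequence

theorem isWeaklyRegular_map_X {σ R : Type*} [CommRing R] {l : List σ} (hl : l.Nodup) :
    IsWeaklyRegular (MvPolynomial σ R) (l.map (X : σ → MvPolynomial σ R)) := by
  induction l using List.reverseRecOn with
  | nil => simp
  | append_singleton l a ih =>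
    obtain ⟨hl, -, ha⟩ := List.nodup_append.1 hl
    have hspan : Ideal.ofList (l.map (X : σ → MvPolynomial σ R)) =
        Ideal.span (X '' {i | i ∈ l}) := by
      simp [Ideal.ofList, Set.image]
    rw [List.map_append, List.map_singleton, isWeaklyRegular_concat_iff, hspan]
    refine ⟨ih hl, fun p hp ↦ ?_⟩
    rw [mem_ideal_span_X_image] at hp ⊢
    intro m hm
    obtain ⟨i, hi, him⟩ := hp (Finsupp.single a 1 + m) (by
      rw [mem_support_iff, coeff_X_mul]
      exact mem_support_iff.1 hm)
    have hai : a ≠ i := (ha i hi a (by simp)).symm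
    exact ⟨i, hi, by simpa [Finsupp.single_apply, hai] using him⟩

theorem idealOfVars_ne_top {σ R : Type*} [CommRing R] [Nontrivial R] : idealOfVars σ R ≠ ⊤ := by
  rw [Ne, Ideal.eq_top_iff_one, ← pow_one (idealOfVars σ R), ← C_1, C_mem_pow_idealOfVars_iff]
  simp

theorem isRegular_ofFn_X {n : ℕ} {R : Type*} [CommRing R] [Nontrivial R] :
    IsRegular (MvPolynomial (Fin n) R) (List.ofFn (X : Fin n → MvPolynomial (Fin n) R)) := by
  have hspan : Ideal.ofList (List.ofFn (X : Fin n → MvPolynomial (Fin n) R)) =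
      idealOfVars (Fin n) R := by
    simp [Ideal.ofList, idealOfVars, Set.range]
  refine ⟨?_, by simpa [hspan] using idealOfVars_ne_top.symm⟩
  rw [List.ofFn_eq_map]
  exact isWeaklyRegular_map_X (List.nodup_finRange n)

theorem isHomogeneous_mem_pow_idealOfVars {σ R : Type*} [CommRing R] {p : MvPolynomial σ R}
    {k : ℕ} (hp : p.IsHomogeneous k) : p ∈ idealOfVars σ R ^ k :=
  (mem_pow_idealOfVars_iff k p).2 fun _ hx ↦ (hp.degree_eq_sum_deg_support hx).le

theorem isUnit_of_isHomogeneous_of_notMem {σ 𝕜 : Type*} [Field 𝕜] {p : MvPolynomial σ 𝕜}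
    {d : ℕ} (hp : p.IsHomogeneous d) (hpI : p ∉ idealOfVars σ 𝕜) : IsUnit p := by
  obtain rfl : d = 0 := by
    by_contra hd
    exact hpI (Ideal.pow_le_self hd (isHomogeneous_mem_pow_idealOfVars hp))
  rw [← totalDegree_zero_iff_isHomogeneous, totalDegree_eq_zero_iff_eq_C] at hp
  refine hp ▸ (isUnit_iff_ne_zero.2 fun h0 ↦ hpI ?_).map C
  rw [hp, h0, map_zero]
  exact zero_mem _

/-- Generic linear combinations of the forms are a regular sequence, and the Koszul syzygies of the
combinations are those of the forms. -/
theorem hasKoszulSyzygies_of_isHomogeneous {n : ℕ} {𝕜 : Type*} [Field 𝕜] [Infinite 𝕜]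
    {g : Fin n → MvPolynomial (Fin n) 𝕜} {d k : ℕ} (hg : ∀ i, (g i).IsHomogeneous d)
    (hk : idealOfVars (Fin n) 𝕜 ^ k ≤ Ideal.span (Set.range g)) : HasKoszulSyzygies g := by
  by_cases hgI : ∀ i, g i ∈ idealOfVars (Fin n) 𝕜
  · let L := Fintype.linearCombination 𝕜 g
    have hLI : ∀ c, L c ∈ idealOfVars (Fin n) 𝕜 := fun c ↦ by
      rw [Fintype.linearCombination_apply]
      exact sum_mem fun i _ ↦ Submodule.smul_of_tower_mem _ _ (hgI i)
    have hgL : Set.range g ⊆ Set.range L := Set.range_subset_iff.2 fun i ↦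
      ⟨Pi.single i 1, by simp [L, Fintype.linearCombination_apply_single]⟩
    obtain ⟨c, hc, hreg⟩ := exists_linearIndependent_isWeaklyRegular idealOfVars_ne_top L hLI
      (hk.trans (Ideal.span_mono hgL)) isRegular_ofFn_X
      (fun w hw ↦ by
        obtain ⟨i, rfl⟩ := (List.mem_ofFn' X w).1 hw
        exact Ideal.subset_span ⟨i, rfl⟩)
      (List.length_ofFn).ge
    have hP : IsUnit ((Matrix.of c).map (C : 𝕜 → MvPolynomial (Fin n) 𝕜)) :=
      (Matrix.linearIndependent_rows_iff_isUnit.1 hc).map C.mapMatrix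
    refine hasKoszulSyzygies_of_mulVec hP ?_
    convert hasKoszulSyzygies_of_isWeaklyRegular hreg using 1
    ext1 i
    simp [L, Matrix.mulVec, dotProduct, Fintype.linearCombination_apply, smul_eq_C_mul]
  · push Not at hgI
    obtain ⟨i, hi⟩ := hgI
    exact hasKoszulSyzygies_of_isUnit (isUnit_of_isHomogeneous_of_notMem (hg i) hi)

end Forms

section ParameterMaps

open MvPolynomial Matrix

variable {σ 𝕜 E : Type*} [Field 𝕜] [CommRing E] [Algebra 𝕜 E]

/-- The ideal of `E` generated by the images of the variables. -/
def paramIdeal (ι : MvPolynomial σ 𝕜 →ₐ[𝕜] E) : Ideal E := (idealOfVars σ 𝕜).map ι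

/-- The images of the variables generate an ideal in the Jacobson radical of `E` along which `E` has
residue field `𝕜` and associated graded ring `𝕜[X]`. When `E` is local they are a regular system of
parameters; the formulation avoids Noetherianity, which rings of smooth germs lack. -/
structure IsRegularParameterMap (ι : MvPolynomial σ 𝕜 →ₐ[𝕜] E) : Prop where
  le_jacobson : paramIdeal ι ≤ Ideal.jacobson ⊥
  eq_zero_of_map_mem : ∀ {k : ℕ} {p : MvPolynomial σ 𝕜}, p.IsHomogeneous k →
    ι p ∈ paramIdeal ι ^ (k + 1) → p = 0
  exists_sub_algebraMap_mem : ∀ e : E, ∃ c : 𝕜, e - algebraMap 𝕜 E c ∈ paramIdeal ι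

theorem map_mem_paramIdeal_pow (ι : MvPolynomial σ 𝕜 →ₐ[𝕜] E) {k : ℕ} {p : MvPolynomial σ 𝕜}
    (hp : p ∈ idealOfVars σ 𝕜 ^ k) : ι p ∈ paramIdeal ι ^ k := by
  rw [paramIdeal, ← Ideal.map_pow]
  exact Ideal.mem_map_of_mem ι hp

theorem mem_paramIdeal_pow_of_sub_mem {ι : MvPolynomial σ 𝕜 →ₐ[𝕜] E} {k : ℕ}
    {p : MvPolynomial σ 𝕜} {x : E} (hp : p.IsHomogeneous k)
    (hx : x - ι p ∈ paramIdeal ι ^ (k + 1)) : x ∈ paramIdeal ι ^ k := by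
  rw [← sub_add_cancel x (ι p)]
  exact add_mem (Ideal.pow_le_pow_right k.le_succ hx)
    (map_mem_paramIdeal_pow ι (isHomogeneous_mem_pow_idealOfVars hp))

theorem homogeneousComponent_mul_of_isHomogeneous {g : MvPolynomial σ 𝕜} {d : ℕ}
    (hg : g.IsHomogeneous d) (o : ℕ) (p : MvPolynomial σ 𝕜) :
    homogeneousComponent o (p * g) =
      if d ≤ o then homogeneousComponent (o - d) p * g else 0 := by
  let _ : GradedAlgebra (homogeneousSubmodule σ 𝕜) := MvPolynomial.gradedAlgebra
  have hcomp : ∀ (q : MvPolynomial σ 𝕜) (i : ℕ),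
      (DirectSum.decompose (homogeneousSubmodule σ 𝕜) q i : MvPolynomial σ 𝕜) =
        homogeneousComponent i q := fun q i ↦ decomposition.decompose'_apply q i
  simpa only [hcomp] using DirectSum.coe_decompose_mul_of_right_mem (homogeneousSubmodule σ 𝕜)
    (a := p) o ((mem_homogeneousSubmodule d g).2 hg)

namespace IsRegularParameterMap

variable {ι : MvPolynomial σ 𝕜 →ₐ[𝕜] E} (h : IsRegularParameterMap ι)
include h

theorem exists_isHomogeneous_sub_mem {o : ℕ} {x : E} (hx : x ∈ paramIdeal ι ^ o) :
    ∃ p : MvPolynomial σ 𝕜, p.IsHomogeneous o ∧ x - ι p ∈ paramIdeal ι ^ (o + 1) := by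
  rw [paramIdeal, ← Ideal.map_pow, pow_idealOfVars_eq_span, Ideal.map_span] at hx
  induction hx using Submodule.span_induction with
  | mem x hx =>
    obtain ⟨_, ⟨m, hm, rfl⟩, rfl⟩ := hx
    exact ⟨monomial m 1, isHomogeneous_monomial 1 hm, by simp⟩
  | zero => exact ⟨0, isHomogeneous_zero _ _ _, by simp⟩
  | add x y _ _ hx hy =>
    obtain ⟨p, hp, hxp⟩ := hx
    obtain ⟨q, hq, hyq⟩ := hy
    exact ⟨p + q, hp.add hq, by simpa [add_sub_add_comm] using add_mem hxp hyq⟩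
  | smul e x _ hx =>
    obtain ⟨p, hp, hxp⟩ := hx
    obtain ⟨c, hc⟩ := h.exists_sub_algebraMap_mem e
    refine ⟨c • p, (homogeneousSubmodule σ 𝕜 o).smul_mem c hp, ?_⟩
    have hsplit : e • x - ι (c • p) = e * (x - ι p) + (e - algebraMap 𝕜 E c) * ι p := by
      rw [map_smul, smul_eq_mul, Algebra.smul_def]; ring
    rw [hsplit, pow_succ']
    refine add_mem (Ideal.mul_mem_left _ _ (by rwa [← pow_succ'])) (Ideal.mul_mem_mul hc ?_)
    exact map_mem_paramIdeal_pow ι (isHomogeneous_mem_pow_idealOfVars hp)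

theorem exists_sub_mem (o : ℕ) (x : E) : ∃ p : MvPolynomial σ 𝕜, x - ι p ∈ paramIdeal ι ^ o := by
  induction o with
  | zero => exact ⟨0, by simp⟩
  | succ o ih =>
    obtain ⟨p, hp⟩ := ih
    obtain ⟨q, -, hq⟩ := h.exists_isHomogeneous_sub_mem hp
    exact ⟨p + q, by rwa [map_add, ← sub_sub]⟩

theorem map_mem_pow_iff {o : ℕ} {p : MvPolynomial σ 𝕜} :
    ι p ∈ paramIdeal ι ^ o ↔ p ∈ idealOfVars σ 𝕜 ^ o := by
  refine ⟨fun hp ↦ ?_, map_mem_paramIdeal_pow ι⟩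
  induction o with
  | zero => simp
  | succ o ih =>
    have hpo := ih (Ideal.pow_le_pow_right o.le_succ hp)
    have hrest : p - homogeneousComponent o p ∈ idealOfVars σ 𝕜 ^ (o + 1) := by
      rw [mem_pow_idealOfVars_iff'] at hpo ⊢
      intro x hx
      rw [coeff_sub, coeff_homogeneousComponent]
      rcases (Nat.lt_succ_iff.1 hx).lt_or_eq with hlt | heq
      · simp [hlt.ne, hpo x hlt]
      · simp [heq]
    have hcomp : homogeneousComponent o p = 0 :=
      h.eq_zero_of_map_mem (homogeneousComponent_isHomogeneous o p) (by
        simpa using sub_mem hp (map_mem_paramIdeal_pow ι hrest))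
    simpa [hcomp] using hrest

theorem pow_idealOfVars_le_span {κ : Type*} [Finite κ] {g : κ → MvPolynomial σ 𝕜} {d k : ℕ}
    (hg : ∀ i, (g i).IsHomogeneous d)
    (hk : paramIdeal ι ^ k ≤ Ideal.span (Set.range fun i ↦ ι (g i))) :
    idealOfVars σ 𝕜 ^ k ≤ Ideal.span (Set.range g) := by
  have := Fintype.ofFinite κ
  rw [pow_idealOfVars_eq_span, Ideal.span_le]
  rintro _ ⟨x, hx, rfl⟩
  have hq : (monomial x (1 : 𝕜)).IsHomogeneous k := isHomogeneous_monomial _ hx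
  obtain ⟨e, he⟩ := Ideal.mem_span_range_iff_exists_fun.1
    (hk (map_mem_paramIdeal_pow ι (isHomogeneous_mem_pow_idealOfVars hq)))
  choose s hs using fun i ↦ h.exists_sub_mem (k + 1) (e i)
  have hrest : monomial x 1 - ∑ i, s i * g i ∈ idealOfVars σ 𝕜 ^ (k + 1) := by
    rw [← h.map_mem_pow_iff, map_sub, ← he, map_sum, ← Finset.sum_sub_distrib]
    simp only [map_mul, ← sub_mul]
    exact Ideal.sum_mem _ fun i _ ↦ Ideal.mul_mem_right _ _ (hs i)
  have hcomp : homogeneousComponent k (monomial x 1 - ∑ i, s i * g i) = 0 :=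
    homogeneousComponent_eq_zero' k _ fun y hy ↦
      ((Nat.lt_succ_self k).trans_le ((mem_pow_idealOfVars_iff _ _).1 hrest y hy)).ne'
  rw [map_sub, homogeneousComponent_eq_self hq, map_sum, sub_eq_zero] at hcomp
  change monomial x 1 ∈ _
  rw [hcomp]
  refine Ideal.sum_mem _ fun i _ ↦ ?_
  rw [homogeneousComponent_mul_of_isHomogeneous (hg i)]
  split_ifs
  · exact Ideal.mul_mem_left _ _ (Ideal.subset_span ⟨i, rfl⟩)
  · exact zero_mem _

end IsRegularParameterMap
end ParameterMaps

section GradedSyzygies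

open MvPolynomial Matrix

variable {σ 𝕜 E κ : Type*} [Field 𝕜] [CommRing E] [Algebra 𝕜 E] [Fintype κ]

theorem HasKoszulSyzygies.exists_mem_pow {g : κ → MvPolynomial σ 𝕜} (hsyz : HasKoszulSyzygies g)
    {d o : ℕ} (hg : ∀ i, (g i).IsHomogeneous d) {α : κ → MvPolynomial σ 𝕜}
    (hα : ∀ i, (α i).IsHomogeneous o) (hαg : α ⬝ᵥ g = 0) :
    ∃ c : Matrix κ κ (MvPolynomial σ 𝕜), α = (c - cᵀ) *ᵥ g ∧
      ∀ i j, c i j ∈ idealOfVars σ 𝕜 ^ (o - d) := by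
  obtain ⟨c, hc⟩ := hsyz α hαg
  rcases lt_or_ge o d with hod | hdo
  · exact ⟨c, hc, by simp [Nat.sub_eq_zero_of_le hod.le]⟩
  refine ⟨c.map (homogeneousComponent (o - d)), funext fun i ↦ ?_, fun i j ↦
    isHomogeneous_mem_pow_idealOfVars (homogeneousComponent_isHomogeneous _ _)⟩
  have hi := congrArg (homogeneousComponent o) (congrFun hc i)
  rw [homogeneousComponent_eq_self (hα i)] at hi
  simpa [mulVec, dotProduct, homogeneousComponent_mul_of_isHomogeneous (hg _), hdo] using hi

namespace IsRegularParameterMap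

variable {ι : MvPolynomial σ 𝕜 →ₐ[𝕜] E} (h : IsRegularParameterMap ι) {d : ℕ}
  {g : κ → MvPolynomial σ 𝕜} (hg : ∀ i, (g i).IsHomogeneous d) (hsyz : HasKoszulSyzygies g)
  {f : κ → E} (hf : ∀ i, f i - ι (g i) ∈ paramIdeal ι ^ (d + 1))

include h hg hsyz hf

/-- The leading forms of the coefficients are a syzygy of `g`, hence Koszul, and subtracting the
corresponding Koszul syzygy of `f` raises their order. -/
theorem exists_dotProduct_eq_of_mem_pow_succ {K o : ℕ} (hK : o + d < K) {a : κ → E}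
    (ha : ∀ i, a i ∈ paramIdeal ι ^ o) (haf : a ⬝ᵥ f ∈ paramIdeal ι ^ K) :
    ∃ b : κ → E, b ⬝ᵥ f = a ⬝ᵥ f ∧ ∀ i, b i ∈ paramIdeal ι ^ (o + 1) := by
  choose α hα haα using fun i ↦ h.exists_isHomogeneous_sub_mem (ha i)
  have hαg : α ⬝ᵥ g = 0 := by
    refine h.eq_zero_of_map_mem (k := o + d)
      (IsHomogeneous.sum _ _ _ fun i _ ↦ (hα i).mul (hg i)) ?_
    have hsplit : ι (α ⬝ᵥ g) = a ⬝ᵥ f -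
        ∑ i, ((a i - ι (α i)) * f i + ι (α i) * (f i - ι (g i))) := by
      simp only [dotProduct, map_sum, map_mul, ← Finset.sum_sub_distrib]
      exact Finset.sum_congr rfl fun i _ ↦ by ring
    rw [hsplit]
    refine sub_mem (Ideal.pow_le_pow_right hK haf) (Ideal.sum_mem _ fun i _ ↦ add_mem ?_ ?_)
    · rw [Nat.add_right_comm, pow_add]
      exact Ideal.mul_mem_mul (haα i) (mem_paramIdeal_pow_of_sub_mem (hg i) (hf i))
    · rw [add_assoc, pow_add]
      exact Ideal.mul_mem_mul
        (map_mem_paramIdeal_pow ι (isHomogeneous_mem_pow_idealOfVars (hα i))) (hf i)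
  obtain ⟨c, hc, hcmem⟩ := hsyz.exists_mem_pow hg hα hαg
  refine ⟨a - (c.map ι - (c.map ι)ᵀ) *ᵥ f, ?_, fun i ↦ ?_⟩
  · rw [sub_dotProduct, dotProduct_sub_transpose_mulVec, sub_zero]
  have hsplit : (a - (c.map ι - (c.map ι)ᵀ) *ᵥ f) i =
      (a i - ι (α i)) - ∑ j, ι (c i j - c j i) * (f j - ι (g j)) := by
    rw [hc]
    simp only [Pi.sub_apply, mulVec, dotProduct, Matrix.sub_apply, map_apply, transpose_apply,
      map_sum, map_mul, map_sub, mul_sub, Finset.sum_sub_distrib]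
    ring
  rw [hsplit]
  refine sub_mem (haα i) (Ideal.sum_mem _ fun j _ ↦ ?_)
  refine Ideal.pow_le_pow_right (by omega : o + 1 ≤ (o - d) + (d + 1)) ?_
  rw [pow_add]
  exact Ideal.mul_mem_mul (map_mem_paramIdeal_pow ι (sub_mem (hcmem i j) (hcmem j i))) (hf j)

theorem exists_dotProduct_eq_of_mem_pow {K : ℕ} {e : E} (he : e ∈ Ideal.span (Set.range f))
    (heK : e ∈ paramIdeal ι ^ K) :
    ∃ a : κ → E, a ⬝ᵥ f = e ∧ ∀ i, a i ∈ paramIdeal ι ^ (K - d) := by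
  suffices hind : ∀ o ≤ K - d, ∃ a : κ → E, a ⬝ᵥ f = e ∧ ∀ i, a i ∈ paramIdeal ι ^ o from
    hind _ le_rfl
  intro o ho
  induction o with
  | zero =>
    obtain ⟨a, ha⟩ := Ideal.mem_span_range_iff_exists_fun.1 he
    exact ⟨a, ha, by simp⟩
  | succ o ih =>
    obtain ⟨a, rfl, ha⟩ := ih (by omega)
    exact h.exists_dotProduct_eq_of_mem_pow_succ hg hsyz hf (by omega) ha heK

theorem pow_inf_span_sup_le {f' : κ → E} (hf' : ∀ i, f' i - ι (g i) ∈ paramIdeal ι ^ (d + 1))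
    (j : ℕ) : paramIdeal ι ^ j ⊓ (Ideal.span (Set.range f) ⊔ paramIdeal ι ^ (j + 1)) ≤
      Ideal.span (Set.range f') ⊔ paramIdeal ι ^ (j + 1) := by
  rintro x ⟨hxj, hx⟩
  obtain ⟨e, he, y, hy, rfl⟩ := Submodule.mem_sup.1 hx
  have hej : e ∈ paramIdeal ι ^ j := by
    simpa using sub_mem hxj (Ideal.pow_le_pow_right j.le_succ hy)
  obtain ⟨a, rfl, ha⟩ := h.exists_dotProduct_eq_of_mem_pow hg hsyz hf he hej
  have hsplit : a ⬝ᵥ f + y =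
      a ⬝ᵥ f' + (∑ i, a i * ((f i - ι (g i)) - (f' i - ι (g i))) + y) := by
    simp only [dotProduct, sub_sub_sub_cancel_right, mul_sub, Finset.sum_sub_distrib]
    ring
  rw [hsplit]
  refine Submodule.add_mem_sup (Ideal.mem_span_range_iff_exists_fun.2 ⟨a, rfl⟩)
    (add_mem (Ideal.sum_mem _ fun i _ ↦ ?_) hy)
  refine Ideal.pow_le_pow_right (by omega : j + 1 ≤ (j - d) + (d + 1)) ?_
  rw [pow_add]
  exact Ideal.mul_mem_mul (ha i) (sub_mem (hf i) (hf' i))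

end IsRegularParameterMap
end GradedSyzygies

section FiltrationRank

variable {R M : Type*} [DivisionRing R] [AddCommGroup M] [Module R M]

theorem rank_quotient_eq_rank_quotient_sup_add (p q : Submodule R M) :
    Module.rank R (M ⧸ q) = Module.rank R (M ⧸ (p ⊔ q)) +
      Module.rank R (p ⧸ (p ⊓ q).submoduleOf p) := by
  have hrange : LinearMap.range (q.mkQ ∘ₗ p.subtype) = p.map q.mkQ := by
    rw [LinearMap.range_comp, Submodule.range_subtype]
  have hker : LinearMap.ker (q.mkQ ∘ₗ p.subtype) = (p ⊓ q).submoduleOf p := by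
    simp [LinearMap.ker_comp, Submodule.submoduleOf]
  rw [← Submodule.rank_quotient_add_rank (p.map q.mkQ), ← hrange, ← hker, sup_comm,
    (LinearMap.quotKerEquivRange _).rank_eq, hrange,
    (Submodule.quotientQuotientEquivQuotientSup q p).rank_eq]

theorem rank_quotient_sup_eq_of_filtration {A : ℕ → Submodule R M} (hA0 : A 0 = ⊤)
    (hA : Antitone A) {B B' : Submodule R M}
    (hB : ∀ j, A j ⊓ (B ⊔ A (j + 1)) = A j ⊓ (B' ⊔ A (j + 1))) (j : ℕ) :
    Module.rank R (M ⧸ (B ⊔ A j)) = Module.rank R (M ⧸ (B' ⊔ A j)) := by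
  induction j with
  | zero => rw [hA0, sup_top_eq, sup_top_eq]
  | succ j ih =>
    have hsup (C : Submodule R M) : A j ⊔ (C ⊔ A (j + 1)) = C ⊔ A j := by
      rw [sup_left_comm, sup_eq_left.2 (hA j.le_succ)]
    rw [rank_quotient_eq_rank_quotient_sup_add (A j) (B ⊔ A (j + 1)),
      rank_quotient_eq_rank_quotient_sup_add (A j) (B' ⊔ A (j + 1)), hB j, hsup, hsup, ih]

end FiltrationRank

section LeadingForms

open MvPolynomial

namespace IsRegularParameterMap

variable {n : ℕ} {𝕜 E : Type*} [Field 𝕜] [CommRing E] [Algebra 𝕜 E]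

theorem paramIdeal_pow_le_of_le_sup {σ : Type*} [Finite σ] {ι : MvPolynomial σ 𝕜 →ₐ[𝕜] E}
    (h : IsRegularParameterMap ι) {k : ℕ} {J : Ideal E}
    (hJ : paramIdeal ι ^ k ≤ J ⊔ paramIdeal ι ^ (k + 1)) : paramIdeal ι ^ k ≤ J := by
  have hfg : (paramIdeal ι ^ k).FG := by
    rw [paramIdeal, ← Ideal.map_pow]
    exact Ideal.FG.map (IsNoetherian.noetherian _) _
  refine Submodule.le_of_le_smul_of_le_jacobson_bot hfg h.le_jacobson ?_
  rwa [smul_eq_mul, ← pow_succ']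

theorem exists_paramIdeal_pow_le {σ : Type*} [Finite σ] {ι : MvPolynomial σ 𝕜 →ₐ[𝕜] E}
    (h : IsRegularParameterMap ι) {J : Ideal E} (hJ : Module.rank 𝕜 (E ⧸ J) < Cardinal.aleph0) :
    ∃ k, paramIdeal ι ^ k ≤ J := by
  have : Module.Finite 𝕜 (E ⧸ J) := Module.rank_lt_aleph0_iff.1 hJ
  have : IsArtinian (E ⧸ J) (E ⧸ J) := isArtinian_of_tower 𝕜 inferInstance
  obtain ⟨k, hk⟩ := IsArtinian.monotone_stabilizes (R := E ⧸ J) (M := E ⧸ J)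
    ⟨fun k ↦ OrderDual.toDual ((paramIdeal ι).map (Ideal.Quotient.mk J) ^ k),
      fun _ _ hab ↦ Ideal.pow_le_pow_right hab⟩
  have hk : (paramIdeal ι).map (Ideal.Quotient.mk J) ^ k =
      (paramIdeal ι).map (Ideal.Quotient.mk J) ^ (k + 1) := hk (k + 1) k.le_succ
  refine ⟨k, h.paramIdeal_pow_le_of_le_sup fun x hx ↦ ?_⟩
  have hmk : Ideal.Quotient.mk J x ∈ (paramIdeal ι ^ (k + 1)).map (Ideal.Quotient.mk J) := by
    rw [Ideal.map_pow, ← hk, ← Ideal.map_pow]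
    exact Ideal.mem_map_of_mem _ hx
  obtain ⟨y, hy, hyx⟩ := (Ideal.mem_map_iff_of_surjective _ Ideal.Quotient.mk_surjective).1 hmk
  rw [← sub_add_cancel x y]
  exact Submodule.add_mem_sup (Ideal.Quotient.eq.1 hyx.symm) hy

/-- The spans of `f` and `ι ∘ g` have the same image in the graded ring of `E`. -/
theorem rank_quotient_span_eq_of_sub_mem [Infinite 𝕜] {ι : MvPolynomial (Fin n) 𝕜 →ₐ[𝕜] E}
    (h : IsRegularParameterMap ι) {d : ℕ} {g : Fin n → MvPolynomial (Fin n) 𝕜}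
    (hg : ∀ i, (g i).IsHomogeneous d) {f : Fin n → E}
    (hf : ∀ i, f i - ι (g i) ∈ paramIdeal ι ^ (d + 1))
    (hfin : Module.rank 𝕜 (E ⧸ Ideal.span (Set.range fun i ↦ ι (g i))) < Cardinal.aleph0) :
    Module.rank 𝕜 (E ⧸ Ideal.span (Set.range f)) =
      Module.rank 𝕜 (E ⧸ Ideal.span (Set.range fun i ↦ ι (g i))) := by
  set I := Ideal.span (Set.range f)
  set I' := Ideal.span (Set.range fun i ↦ ι (g i))
  obtain ⟨k, hk'⟩ := h.exists_paramIdeal_pow_le hfin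
  have hsyz := hasKoszulSyzygies_of_isHomogeneous hg (h.pow_idealOfVars_le_span hg hk')
  have hg' : ∀ i, ι (g i) - ι (g i) ∈ paramIdeal ι ^ (d + 1) := by simp
  have hgr (j : ℕ) : paramIdeal ι ^ j ⊓ (I ⊔ paramIdeal ι ^ (j + 1)) =
      paramIdeal ι ^ j ⊓ (I' ⊔ paramIdeal ι ^ (j + 1)) :=
    le_antisymm (le_inf inf_le_left (h.pow_inf_span_sup_le hg hsyz hf hg' j))
      (le_inf inf_le_left (h.pow_inf_span_sup_le hg hsyz hg' hf j))
  have hk : paramIdeal ι ^ k ≤ I := h.paramIdeal_pow_le_of_le_sup <|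
    (le_inf le_rfl (hk'.trans le_sup_left)).trans ((hgr k).ge.trans inf_le_right)
  have hrank := rank_quotient_sup_eq_of_filtration
    (A := fun j ↦ (paramIdeal ι ^ j).restrictScalars 𝕜) (B := I.restrictScalars 𝕜)
    (B' := I'.restrictScalars 𝕜) (by simp) (fun _ _ hab ↦ Ideal.pow_le_pow_right hab)
    (fun j ↦ by
      simpa only [Submodule.restrictScalars_inf, Submodule.restrictScalars_sup] using
        congrArg (Submodule.restrictScalars 𝕜) (hgr j)) k
  rw [sup_eq_left.2 (show (paramIdeal ι ^ k).restrictScalars 𝕜 ≤ I.restrictScalars 𝕜 from hk),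
    sup_eq_left.2 (show (paramIdeal ι ^ k).restrictScalars 𝕜 ≤ I'.restrictScalars 𝕜 from hk')]
    at hrank
  rwa [(Submodule.Quotient.restrictScalarsEquiv 𝕜 I).rank_eq,
    (Submodule.Quotient.restrictScalarsEquiv 𝕜 I').rank_eq] at hrank

end IsRegularParameterMap
end LeadingForms

section HadamardLemma

open MeasureTheory Bornology

variable {E F G : Type*} [NormedAddCommGroup E] [NormedSpace ℝ E] [NormedAddCommGroup F]
  [NormedSpace ℝ F] [NormedAddCommGroup G] [NormedSpace ℝ G]

/-- On a bounded set the integral is a convolution with the indicator of the set, evaluated at the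
origin, once the integrand has been cut off by a bump function. -/
theorem contDiff_setIntegral_of_isBounded [FiniteDimensional ℝ G] [MeasurableSpace G]
    [BorelSpace G] {μ : Measure G} [IsFiniteMeasureOnCompacts μ] {s : Set G}
    (hs : MeasurableSet s) (hsb : IsBounded s) {N : ℕ∞} {H : E × G → F} (hH : ContDiff ℝ N H) :
    ContDiff ℝ N fun x ↦ ∫ t in s, H (x, t) ∂μ := by
  obtain ⟨r, hr, hsr⟩ := hsb.subset_closedBall_lt 0 0
  let ρ : ContDiffBump (0 : G) := ⟨r, r + 1, hr, lt_add_one r⟩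
  let k : G → ℝ := s.indicator 1
  let g : E → G → F := fun x y ↦ ρ y • H (x, -y)
  have hk : LocallyIntegrable k μ := by
    refine Integrable.locallyIntegrable ((integrable_indicator_iff hs).2 (integrableOn_const ?_))
    exact (hsb.measure_lt_top).ne
  have hg : ContDiff ℝ N (Function.HasUncurry.uncurry g) :=
    (ρ.contDiff.comp contDiff_snd).smul (hH.comp (contDiff_fst.prodMk contDiff_snd.neg))
  have hconv := contDiffOn_convolution_right_with_param (μ := μ) (ContinuousLinearMap.lsmul ℝ ℝ)
    isOpen_univ (isCompact_closedBall (0 : G) (r + 1))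
    (fun x y _ hy ↦ by simp [g, ρ.zero_of_le_dist (not_le.1 hy).le]) hk hg.contDiffOn
  rw [univ_prod_univ, contDiffOn_univ] at hconv
  convert hconv.comp (contDiff_prodMk_left (0 : G)) using 1
  ext1 x
  rw [← integral_indicator hs]
  refine integral_congr_ae (.of_forall fun t ↦ ?_)
  by_cases ht : t ∈ s
  · have hρ : ρ (-t) = 1 := ρ.one_of_mem_closedBall (by simpa using hsr ht)
    simp [k, g, ht, hρ]
  · simp [k, ht]

theorem exists_contDiff_eq_add_apply [CompleteSpace F] {f : E → F}
    (hf : ContDiff ℝ (⊤ : ℕ∞) f) :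
    ∃ g : E → E →L[ℝ] F, ContDiff ℝ (⊤ : ℕ∞) g ∧ ∀ x, f x = f 0 + g x x := by
  have hdf : ContDiff ℝ (⊤ : ℕ∞) fun q : E × ℝ ↦ fderiv ℝ f (q.2 • q.1) :=
    (hf.fderiv_right (by simp)).comp (contDiff_snd.smul contDiff_fst)
  refine ⟨fun x ↦ ∫ t in Ioc (0 : ℝ) 1, fderiv ℝ f (t • x),
    contDiff_setIntegral_of_isBounded measurableSet_Ioc (isBounded_Ioc 0 1) hdf, fun x ↦ ?_⟩
  have hcont : Continuous fun t : ℝ ↦ fderiv ℝ f (t • x) :=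
    hdf.continuous.comp (Continuous.prodMk_right x)
  have hderiv (t : ℝ) : HasDerivAt (fun t : ℝ ↦ f (t • x)) (fderiv ℝ f (t • x) x) t :=
    ((hf.differentiable (by simp)) (t • x)).hasFDerivAt.comp_hasDerivAt t
      (by simpa using (hasDerivAt_id t).smul_const x)
  have hint := intervalIntegral.integral_eq_sub_of_hasDerivAt (a := 0) (b := 1)
    (fun t _ ↦ hderiv t) ((hcont.clm_apply continuous_const).intervalIntegrable _ _)
  rw [one_smul, zero_smul, intervalIntegral.integral_of_le zero_le_one] at hint
  beta_reduce
  rw [ContinuousLinearMap.integral_apply hcont.integrableOn_Ioc, hint, add_sub_cancel]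

end HadamardLemma

section SmoothGerms

open MvPolynomial

variable {n : ℕ}

/-- The algebra of smooth functions on `ℝ^n`, which taking germs at `0` maps onto `E_n`. -/
def smoothFunctions (n : ℕ) : Subalgebra ℝ (Eucl n → ℝ) where
  carrier := {f | ContDiff ℝ (⊤ : ℕ∞) f}
  add_mem' {f g} (hf : ContDiff ℝ (⊤ : ℕ∞) f) (hg : ContDiff ℝ (⊤ : ℕ∞) g) := hf.add hg
  mul_mem' {f g} (hf : ContDiff ℝ (⊤ : ℕ∞) f) (hg : ContDiff ℝ (⊤ : ℕ∞) g) := hf.mul hg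
  algebraMap_mem' c := show ContDiff ℝ (⊤ : ℕ∞) fun _ ↦ c from contDiff_const

instance : CoeFun (smoothFunctions n) fun _ ↦ Eucl n → ℝ := ⟨Subtype.val⟩

theorem smoothFunctions.contDiff (f : smoothFunctions n) : ContDiff ℝ (⊤ : ℕ∞) (f : Eucl n → ℝ) :=
  f.2

theorem smoothFunctions.differentiable (f : smoothFunctions n) :
    Differentiable ℝ (f : Eucl n → ℝ) :=
  (smoothFunctions.contDiff f).differentiable (by simp)

/-- The germ at `0` of a smooth function. -/
def smoothGerm (n : ℕ) : smoothFunctions n →ₐ[ℝ] smoothGerms n where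
  toFun f := ⟨↑(f : Eucl n → ℝ), f, smoothFunctions.contDiff f, rfl⟩
  map_one' := rfl
  map_mul' _ _ := rfl
  map_zero' := rfl
  map_add' _ _ := rfl
  commutes' c := Subtype.ext <| by
    change _ = algebraMap ℝ (Germ (𝓝 (0 : Eucl n)) ℝ) c
    rw [Algebra.algebraMap_eq_smul_one, Algebra.algebraMap_eq_smul_one]
    rfl

theorem smoothGerm_surjective : Function.Surjective (smoothGerm n) := by
  rintro ⟨_, f, hf, rfl⟩
  exact ⟨⟨f, hf⟩, rfl⟩

theorem smoothGerm_eq_iff {f g : smoothFunctions n} :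
    smoothGerm n f = smoothGerm n g ↔ (f : Eucl n → ℝ) =ᶠ[𝓝 0] g :=
  Subtype.ext_iff.trans Germ.coe_eq

/-- The coordinate functions of `ℝ^n`. -/
def smoothCoord (i : Fin n) : smoothFunctions n :=
  ⟨fun x ↦ x i, show ContDiff ℝ (⊤ : ℕ∞) _ from contDiff_euclidean.1 contDiff_id i⟩

/-- Polynomials as smooth functions. -/
def polyFunction (n : ℕ) : MvPolynomial (Fin n) ℝ →ₐ[ℝ] smoothFunctions n := aeval smoothCoord

theorem polyFunction_apply (p : MvPolynomial (Fin n) ℝ) (x : Eucl n) :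
    polyFunction n p x = eval x p := by
  let ev : smoothFunctions n →ₐ[ℝ] ℝ :=
    (Pi.evalAlgHom ℝ (fun _ : Eucl n ↦ ℝ) x).comp (smoothFunctions n).val
  have hev : ev.comp (polyFunction n) = aeval x := by
    ext i
    simp [ev, polyFunction, smoothCoord]
  exact DFunLike.congr_fun hev p

theorem polyFunction_injective : Function.Injective (polyFunction n) := fun p q hpq ↦
  MvPolynomial.funext fun x ↦ by
    simpa [polyFunction_apply] using congrFun (congrArg Subtype.val hpq) (WithLp.toLp 2 x)

theorem polyFunction_smul {p : MvPolynomial (Fin n) ℝ} {k : ℕ} (hp : p.IsHomogeneous k)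
    (t : ℝ) (v : Eucl n) : polyFunction n p (t • v) = t ^ k * polyFunction n p v := by
  simp only [polyFunction_apply, eval_eq, PiLp.smul_apply, smul_eq_mul, mul_pow,
    Finset.prod_mul_distrib, Finset.prod_pow_eq_pow_sum, Finset.mul_sum]
  refine Finset.sum_congr rfl fun d hd ↦ ?_
  rw [hp.degree_eq_sum_deg_support hd]
  ring

/-- Polynomials as smooth germs. -/
def polyGerm (n : ℕ) : MvPolynomial (Fin n) ℝ →ₐ[ℝ] smoothGerms n :=
  (smoothGerm n).comp (polyFunction n)

theorem paramIdeal_polyGerm :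
    paramIdeal (polyGerm n) = Ideal.span (range fun i ↦ smoothGerm n (smoothCoord i)) := by
  rw [paramIdeal, idealOfVars, Ideal.map_span, ← range_comp]
  simp [Function.comp_def, polyGerm, polyFunction]

theorem smoothGerm_mem_paramIdeal_iff {f : smoothFunctions n} :
    smoothGerm n f ∈ paramIdeal (polyGerm n) ↔ f 0 = 0 := by
  rw [paramIdeal_polyGerm]
  constructor
  · have hle : Ideal.span (range fun i ↦ smoothGerm n (smoothCoord i)) ≤ RingHom.ker
        ((Germ.valueRingHom : Germ (𝓝 (0 : Eucl n)) ℝ →+* ℝ).comp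
          ((smoothGerms n).val : smoothGerms n →+* Germ (𝓝 (0 : Eucl n)) ℝ)) := by
      rw [Ideal.span_le]
      rintro _ ⟨i, rfl⟩
      rfl
    exact fun hf ↦ hle hf
  · intro hf
    obtain ⟨g, hg, hfg⟩ := exists_contDiff_eq_add_apply (smoothFunctions.contDiff f)
    let c (i : Fin n) : smoothFunctions n := ⟨fun x ↦ g x (EuclideanSpace.single i 1),
      show ContDiff ℝ (⊤ : ℕ∞) _ from hg.clm_apply contDiff_const⟩
    have hsum : f = ∑ i, c i * smoothCoord i := by
      ext x
      have hx := congrArg (g x) ((EuclideanSpace.basisFun (Fin n) ℝ).sum_repr x)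
      simp only [EuclideanSpace.basisFun_repr, EuclideanSpace.basisFun_apply, map_sum, map_smul,
        smul_eq_mul] at hx
      simp [hfg x, hf, ← hx, c, smoothCoord, Finset.sum_apply, mul_comm]
    rw [hsum, map_sum]
    simp only [map_mul]
    exact Ideal.sum_mem _ fun i _ ↦ Ideal.mul_mem_left _ _ (Ideal.subset_span ⟨i, rfl⟩)

theorem isUnit_smoothGerm {f : smoothFunctions n} (hf : f 0 ≠ 0) : IsUnit (smoothGerm n f) := by
  have hne : ∀ᶠ x in 𝓝 (0 : Eucl n), f x ≠ 0 :=
    (smoothFunctions.contDiff f).continuous.continuousAt.eventually_ne hf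
  obtain ⟨r, hr, hball⟩ := nhds_basis_closedBall.mem_iff.1 hne
  let ρ : ContDiffBump (0 : Eucl n) := ⟨r / 2, r, half_pos hr, half_lt_self hr⟩
  have hg : ContDiff ℝ (⊤ : ℕ∞) fun x ↦ ρ x * (f x)⁻¹ :=
    (contMDiff_of_tsupport fun x hx ↦ (ρ.contDiff.contDiffAt.mul
      ((smoothFunctions.contDiff f).contDiffAt.inv
        (hball (ρ.tsupport_eq ▸ tsupport_mul_subset_left hx)))).contMDiffAt).contDiff
  refine IsUnit.of_mul_eq_one (smoothGerm n ⟨_, hg⟩) ?_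
  rw [← map_mul, ← map_one (smoothGerm n), smoothGerm_eq_iff]
  filter_upwards [ρ.eventuallyEq_one, hne] with x hρ hx
  simp [hρ, hx]

theorem paramIdeal_polyGerm_le_jacobson : paramIdeal (polyGerm n) ≤ Ideal.jacobson ⊥ := by
  intro e he
  rw [Ideal.mem_jacobson_bot]
  intro y
  obtain ⟨f, rfl⟩ := smoothGerm_surjective e
  obtain ⟨g, rfl⟩ := smoothGerm_surjective y
  rw [← map_mul, ← map_one (smoothGerm n), ← map_add]
  exact isUnit_smoothGerm (by simp [smoothGerm_mem_paramIdeal_iff.1 he])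

theorem isBigO_norm_pow_of_smoothGerm_mem {k : ℕ} {f : smoothFunctions n}
    (hf : smoothGerm n f ∈ paramIdeal (polyGerm n) ^ k) :
    (f : Eucl n → ℝ) =O[𝓝 0] fun x ↦ ‖x‖ ^ k := by
  suffices h : ∀ e ∈ paramIdeal (polyGerm n) ^ k, ∃ g : smoothFunctions n, smoothGerm n g = e ∧
      (g : Eucl n → ℝ) =O[𝓝 0] fun x ↦ ‖x‖ ^ k by
    obtain ⟨g, hgf, hg⟩ := h _ hf
    exact (smoothGerm_eq_iff.1 hgf).symm.trans_isBigO hg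
  clear hf
  induction k with
  | zero =>
    intro e _
    obtain ⟨g, rfl⟩ := smoothGerm_surjective e
    refine ⟨g, rfl, ?_⟩
    simpa using
      (smoothFunctions.contDiff g).continuous.continuousAt.norm.isBoundedUnder_le.isBigO_one ℝ
  | succ k ih =>
    intro e he
    rw [pow_succ] at he
    induction he using Submodule.mul_induction_on' with
    | mem_mul_mem a ha b hb =>
      obtain ⟨g, rfl, hg⟩ := ih a ha
      obtain ⟨h, rfl⟩ := smoothGerm_surjective b
      refine ⟨g * h, map_mul _ _ _, ?_⟩
      have hh := (smoothFunctions.differentiable h 0).isBigO_sub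
      simp only [smoothGerm_mem_paramIdeal_iff.1 hb, sub_zero] at hh
      simp only [pow_succ]
      exact hg.mul hh.norm_right
    | add a _ b _ ha hb =>
      obtain ⟨g, rfl, hg⟩ := ha
      obtain ⟨h, rfl, hh⟩ := hb
      exact ⟨g + h, map_add _ _ _, hg.add hh⟩

end SmoothGerms

section RadialLimits

theorem tendsto_inv_pow_mul_of_isBigO {E : Type*} [NormedAddCommGroup E] [NormedSpace ℝ E]
    {f : E → ℝ} {k : ℕ} (hf : f =O[𝓝 0] fun x ↦ ‖x‖ ^ (k + 1)) {w : ℝ → E} {v : E}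
    (hw : Tendsto w (𝓝[>] 0) (𝓝 v)) :
    Tendsto (fun t : ℝ ↦ (t ^ k)⁻¹ * f (t • w t)) (𝓝[>] 0) (𝓝 0) := by
  have hid : Tendsto (fun t : ℝ ↦ t) (𝓝[>] 0) (𝓝 0) := tendsto_id.mono_left nhdsWithin_le_nhds
  have hcurve : Tendsto (fun t ↦ t • w t) (𝓝[>] 0) (𝓝 0) := by simpa using hid.smul hw
  refine ((isBigO_refl (fun t : ℝ ↦ (t ^ k)⁻¹) _).mul (hf.comp_tendsto hcurve)).trans_tendsto ?_
  have hlim : Tendsto (fun t ↦ t * ‖w t‖ ^ (k + 1)) (𝓝[>] 0) (𝓝 0) := by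
    simpa using hid.mul (hw.norm.pow (k + 1))
  refine hlim.congr' ?_
  filter_upwards [self_mem_nhdsWithin] with t (ht : 0 < t)
  rw [Function.comp_apply, norm_smul, Real.norm_of_nonneg ht.le, mul_pow, pow_succ t]
  field_simp

theorem tendsto_inv_pow_mul_of_lt {u : ℝ → ℝ} {k m : ℕ} (hkm : k < m) {c : ℝ}
    (hu : Tendsto (fun t : ℝ ↦ (t ^ m)⁻¹ * u t) (𝓝[>] 0) (𝓝 c)) :
    Tendsto (fun t : ℝ ↦ (t ^ k)⁻¹ * u t) (𝓝[>] 0) (𝓝 0) := by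
  have hpow : Tendsto (fun t : ℝ ↦ t ^ (m - k)) (𝓝[>] 0) (𝓝 0) :=
    ((continuous_pow (m - k)).tendsto' _ _ (zero_pow (Nat.sub_ne_zero_of_lt hkm))).mono_left
      nhdsWithin_le_nhds
  have hlim := hpow.mul hu
  rw [zero_mul] at hlim
  refine hlim.congr' ?_
  filter_upwards [self_mem_nhdsWithin] with t (ht : 0 < t)
  rw [← Nat.sub_add_cancel hkm.le, pow_add, Nat.add_sub_cancel]
  field_simp

variable {n : ℕ}

open MvPolynomial

theorem tendsto_inv_pow_mul_polyFunction {p : MvPolynomial (Fin n) ℝ} {k : ℕ}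
    (hp : p.IsHomogeneous k) {w : ℝ → Eucl n} {v : Eucl n} (hw : Tendsto w (𝓝[>] 0) (𝓝 v)) :
    Tendsto (fun t : ℝ ↦ (t ^ k)⁻¹ * polyFunction n p (t • w t)) (𝓝[>] 0)
      (𝓝 (polyFunction n p v)) := by
  refine (((smoothFunctions.contDiff (polyFunction n p)).continuous.tendsto v).comp hw).congr' ?_
  filter_upwards [self_mem_nhdsWithin] with t (ht : 0 < t)
  rw [Function.comp_apply, polyFunction_smul hp, inv_mul_cancel_left₀ (pow_pos ht k).ne']

theorem tendsto_inv_pow_mul_of_sub_polyGerm_mem {f : smoothFunctions n}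
    {p : MvPolynomial (Fin n) ℝ} {k : ℕ} (hp : p.IsHomogeneous k)
    (hfp : smoothGerm n f - polyGerm n p ∈ paramIdeal (polyGerm n) ^ (k + 1))
    {w : ℝ → Eucl n} {v : Eucl n} (hw : Tendsto w (𝓝[>] 0) (𝓝 v)) :
    Tendsto (fun t : ℝ ↦ (t ^ k)⁻¹ * f (t • w t)) (𝓝[>] 0) (𝓝 (polyFunction n p v)) := by
  rw [polyGerm, AlgHom.comp_apply, ← map_sub] at hfp
  have hrem := tendsto_inv_pow_mul_of_isBigO (isBigO_norm_pow_of_smoothGerm_mem hfp) hw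
  simpa [mul_sub] using hrem.add (tendsto_inv_pow_mul_polyFunction hp hw)

theorem isRegularParameterMap_polyGerm (n : ℕ) : IsRegularParameterMap (polyGerm n) where
  le_jacobson := paramIdeal_polyGerm_le_jacobson
  eq_zero_of_map_mem {k p} hp hmem := polyFunction_injective <| Subtype.ext <| funext fun v ↦ by
    have hzero := tendsto_inv_pow_mul_of_isBigO (isBigO_norm_pow_of_smoothGerm_mem hmem)
      (tendsto_const_nhds (x := v))
    rw [tendsto_nhds_unique (tendsto_inv_pow_mul_polyFunction hp tendsto_const_nhds) hzero]
    simp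
  exists_sub_algebraMap_mem e := by
    obtain ⟨f, rfl⟩ := smoothGerm_surjective e
    refine ⟨f 0, ?_⟩
    rw [← (smoothGerm n).commutes, ← map_sub, smoothGerm_mem_paramIdeal_iff]
    exact sub_self (f 0)

theorem exists_isHomogeneous_sub_mem_of_tendsto {f : smoothFunctions n} {m : ℕ} {l : Eucl n → ℝ}
    (hl : ∀ v, Tendsto (fun t : ℝ ↦ (t ^ m)⁻¹ * f (t • v)) (𝓝[>] 0) (𝓝 (l v))) :
    ∃ p : MvPolynomial (Fin n) ℝ, p.IsHomogeneous m ∧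
      smoothGerm n f - polyGerm n p ∈ paramIdeal (polyGerm n) ^ (m + 1) ∧
        (polyFunction n p : Eucl n → ℝ) = l := by
  have hmem (k : ℕ) (hk : k ≤ m) : smoothGerm n f ∈ paramIdeal (polyGerm n) ^ k := by
    induction k with
    | zero => simp
    | succ k ih =>
      obtain ⟨p, hp, hfp⟩ :=
        (isRegularParameterMap_polyGerm n).exists_isHomogeneous_sub_mem (ih (by omega))
      have hp0 : p = 0 := polyFunction_injective <| Subtype.ext <| funext fun v ↦ by
        rw [tendsto_nhds_unique (tendsto_inv_pow_mul_of_sub_polyGerm_mem hp hfp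
          tendsto_const_nhds) (tendsto_inv_pow_mul_of_lt hk (hl v))]
        simp
      simpa [hp0] using hfp
  obtain ⟨p, hp, hfp⟩ :=
    (isRegularParameterMap_polyGerm n).exists_isHomogeneous_sub_mem (hmem m le_rfl)
  exact ⟨p, hp, hfp, funext fun v ↦ tendsto_nhds_unique
    (tendsto_inv_pow_mul_of_sub_polyGerm_mem hp hfp tendsto_const_nhds) (hl v)⟩

theorem iteratedDeriv_eq_of_tendsto {u : ℝ → ℝ} {m : ℕ} (hu : ContDiff ℝ m u) {c : ℝ}
    (hc : Tendsto (fun t : ℝ ↦ (t ^ m)⁻¹ * u t) (𝓝[>] 0) (𝓝 c)) :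
    iteratedDeriv m u 0 = m.factorial * c := by
  induction m using Nat.strong_induction_on generalizing c with
  | _ m ih =>
    have hlow (k : ℕ) (hk : k < m) : iteratedDeriv k u 0 = 0 := by
      simpa using ih k hk (hu.of_le (mod_cast hk.le)) (tendsto_inv_pow_mul_of_lt hk hc)
    have htaylor (t : ℝ) : taylorWithinEval u m univ 0 t =
        (m.factorial : ℝ)⁻¹ * t ^ m * iteratedDeriv m u 0 := by
      rw [taylor_within_apply, Finset.sum_range_succ, Finset.sum_eq_zero fun k hk ↦ by
        rw [iteratedDerivWithin_univ, hlow k (Finset.mem_range.1 hk), smul_zero]]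
      simp [iteratedDerivWithin_univ]
    have hrem : Tendsto (fun t ↦ (u t - taylorWithinEval u m univ 0 t) / (t - 0) ^ m)
        (𝓝[>] 0) (𝓝 0) :=
      ((taylor_isLittleO_univ hu).mono nhdsWithin_le_nhds).tendsto_div_nhds_zero
    have hlim : Tendsto (fun t ↦ (t ^ m)⁻¹ * u t) (𝓝[>] 0)
        (𝓝 (0 + (m.factorial : ℝ)⁻¹ * iteratedDeriv m u 0)) := by
      refine (hrem.add_const _).congr' ?_
      filter_upwards [self_mem_nhdsWithin] with t (ht : 0 < t)
      rw [htaylor, sub_zero]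
      field_simp
      ring
    rw [tendsto_nhds_unique hc hlim, zero_add, mul_inv_cancel_left₀ (by positivity)]

theorem inPart_eq_of_tendsto {E : Type*} [NormedAddCommGroup E] [NormedSpace ℝ E] {f : E → ℝ}
    {m : ℕ} (hf : ContDiff ℝ m f) {l : E → ℝ}
    (hl : ∀ v, Tendsto (fun t : ℝ ↦ (t ^ m)⁻¹ * f (t • v)) (𝓝[>] 0) (𝓝 (l v))) :
    inPart f m = l := by
  funext v
  let ray : ℝ →L[ℝ] E := ContinuousLinearMap.toSpanSingleton ℝ v
  have hderiv : iteratedDeriv m (f ∘ ray) 0 = m.factorial * l v :=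
    iteratedDeriv_eq_of_tendsto (hf.comp ray.contDiff) (by simpa [ray] using hl v)
  rw [iteratedDeriv_eq_iteratedFDeriv, ray.iteratedFDeriv_comp_right hf _ le_rfl] at hderiv
  have hderiv' : iteratedFDeriv ℝ m f 0 (fun _ ↦ v) = m.factorial * l v := by
    simpa [ray] using hderiv
  rw [inPart, hderiv', smul_eq_mul, inv_mul_cancel_left₀ (by positivity)]

end RadialLimits

section MilnorNumber

open MvPolynomial

theorem apply_mem_pow_of_mem_pow_succ {R A : Type*} [CommSemiring R] [CommSemiring A] [Algebra R A]
    (D : Derivation R A A) {I : Ideal A} {k : ℕ} {a : A} (ha : a ∈ I ^ (k + 1)) : D a ∈ I ^ k := by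
  induction k generalizing a with
  | zero => simp
  | succ k ih =>
    rw [pow_succ] at ha
    induction ha using Submodule.mul_induction_on' with
    | mem_mul_mem a ha b hb =>
      rw [D.leibniz, smul_eq_mul, smul_eq_mul]
      refine add_mem (Ideal.mul_mem_right _ _ ha) ?_
      rw [pow_succ']
      exact Ideal.mul_mem_mul hb (ih ha)
    | add a _ b _ ha hb => simpa using add_mem ha hb

variable {n : ℕ}

/-- The derivative of smooth functions in the direction `v`. -/
def dirDeriv (v : Eucl n) : Derivation ℝ (smoothFunctions n) (smoothFunctions n) :=
  .mk' {
    toFun f := ⟨fun x ↦ fderiv ℝ f x v, show ContDiff ℝ (⊤ : ℕ∞) _ from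
      ((smoothFunctions.contDiff f).fderiv_right (by simp)).clm_apply contDiff_const⟩
    map_add' f g := Subtype.ext <| funext fun x ↦ congrArg (· v) <|
      fderiv_add (smoothFunctions.differentiable f x) (smoothFunctions.differentiable g x)
    map_smul' c f := Subtype.ext <| funext fun x ↦ congrArg (· v) <|
      fderiv_const_smul (smoothFunctions.differentiable f x) c
  } fun f g ↦ Subtype.ext <| funext fun x ↦ congrArg (· v) <|
    fderiv_mul (smoothFunctions.differentiable f x) (smoothFunctions.differentiable g x)

theorem dirDeriv_apply (v : Eucl n) (f : smoothFunctions n) (x : Eucl n) :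
    dirDeriv v f x = fderiv ℝ f x v := rfl

theorem dirDeriv_polyFunction (i : Fin n) (p : MvPolynomial (Fin n) ℝ) :
    dirDeriv (EuclideanSpace.single i 1) (polyFunction n p) = polyFunction n (pderiv i p) := by
  induction p using MvPolynomial.induction_on with
  | C a => simp [← algebraMap_eq]
  | add p q hp hq => simp [hp, hq]
  | mul_X p j hp =>
    have hX : dirDeriv (EuclideanSpace.single i 1) (polyFunction n (X j)) =
        polyFunction n (pderiv i (X j)) := by
      ext x
      have hcoord : (polyFunction n (X j) : Eucl n → ℝ) = EuclideanSpace.proj (𝕜 := ℝ) j := by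
        ext y
        simp [polyFunction_apply]
      rw [dirDeriv_apply, hcoord, ContinuousLinearMap.fderiv, polyFunction_apply, pderiv_X]
      by_cases h : i = j <;> simp [h, Ne.symm]
    simp [hX, hp]

theorem smoothGerm_dirDeriv_mem_pow (v : Eucl n) {I : Ideal (smoothGerms n)} {k : ℕ}
    {f : smoothFunctions n} (hf : smoothGerm n f ∈ I ^ (k + 1)) :
    smoothGerm n (dirDeriv v f) ∈ I ^ k := by
  rw [← Ideal.map_comap_of_surjective (smoothGerm n) smoothGerm_surjective I, ← Ideal.map_pow,
    Ideal.mem_map_iff_of_surjective (smoothGerm n) smoothGerm_surjective] at hf ⊢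
  obtain ⟨g, hg, hgf⟩ := hf
  refine ⟨dirDeriv v g, apply_mem_pow_of_mem_pow_succ _ hg, smoothGerm_eq_iff.2 ?_⟩
  filter_upwards [(smoothGerm_eq_iff.1 hgf).fderiv (𝕜 := ℝ)] with x hx
  rw [dirDeriv_apply, dirDeriv_apply, hx]

theorem jacobianIdeal_eq_span_single (f : smoothFunctions n) :
    jacobianIdeal n f =
      Ideal.span (range fun i ↦ smoothGerm n (dirDeriv (EuclideanSpace.single i 1) f)) := by
  refine congrArg Ideal.span (ext fun γ ↦ exists_congr fun i ↦ ?_)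
  exact (Subtype.ext_iff (a1 := γ) (a2 := smoothGerm n (dirDeriv _ f))).symm.trans eq_comm

theorem jacobianIdeal_polyFunction (p : MvPolynomial (Fin n) ℝ) :
    jacobianIdeal n (polyFunction n p) = Ideal.span (range fun i ↦ polyGerm n (pderiv i p)) := by
  simp only [jacobianIdeal_eq_span_single, dirDeriv_polyFunction, polyGerm, AlgHom.comp_apply]

theorem jacobianIdeal_eq_span_dirDeriv (f : smoothFunctions n) :
    jacobianIdeal n f = Ideal.span (range fun v ↦ smoothGerm n (dirDeriv v f)) := by
  rw [jacobianIdeal_eq_span_single]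
  refine le_antisymm (Ideal.span_mono ?_) (Ideal.span_le.2 ?_)
  · rintro _ ⟨i, rfl⟩
    exact ⟨_, rfl⟩
  rintro _ ⟨v, rfl⟩
  have hv : dirDeriv v f = ∑ i, v i • dirDeriv (EuclideanSpace.single i 1) f := by
    ext x
    have hx := congrArg (fderiv ℝ f x) ((EuclideanSpace.basisFun (Fin n) ℝ).sum_repr v)
    simp only [EuclideanSpace.basisFun_repr, EuclideanSpace.basisFun_apply, map_sum, map_smul] at hx
    simp [dirDeriv_apply, ← hx]
  simp only [hv, map_sum, map_smul]
  exact sum_mem fun i _ ↦ Submodule.smul_of_tower_mem _ _ (Ideal.subset_span ⟨i, rfl⟩)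

/-- Precomposition of smooth functions with a linear automorphism of `ℝ^n`. -/
def precomp (A : Eucl n ≃L[ℝ] Eucl n) : smoothFunctions n →ₐ[ℝ] smoothFunctions n where
  toFun f := ⟨f ∘ A, show ContDiff ℝ (⊤ : ℕ∞) _ from (smoothFunctions.contDiff f).comp A.contDiff⟩
  map_one' := rfl
  map_zero' := rfl
  map_mul' _ _ := rfl
  map_add' _ _ := rfl
  commutes' _ := rfl

theorem dirDeriv_precomp (A : Eucl n ≃L[ℝ] Eucl n) (v : Eucl n) (f : smoothFunctions n) :
    dirDeriv v (precomp A f) = precomp A (dirDeriv (A v) f) := by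
  ext x
  change fderiv ℝ (f ∘ A) x v = fderiv ℝ f (A x) (A v)
  rw [A.comp_right_fderiv]
  rfl

/-- Pullback of smooth germs along a linear automorphism of `ℝ^n`. -/
def pullback (A : Eucl n ≃L[ℝ] Eucl n) : smoothGerms n →ₐ[ℝ] smoothGerms n where
  toFun e := ⟨(e : Germ (𝓝 (0 : Eucl n)) ℝ).compTendsto A (A.continuous.tendsto' 0 0 (map_zero A)),
    by
      obtain ⟨f, rfl⟩ := smoothGerm_surjective e
      exact (smoothGerm n (precomp A f)).2⟩
  map_one' := rfl
  map_zero' := rfl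
  map_mul' a b := by
    obtain ⟨f, rfl⟩ := smoothGerm_surjective a
    obtain ⟨g, rfl⟩ := smoothGerm_surjective b
    rfl
  map_add' a b := by
    obtain ⟨f, rfl⟩ := smoothGerm_surjective a
    obtain ⟨g, rfl⟩ := smoothGerm_surjective b
    rfl
  commutes' c := by
    rw [← (smoothGerm n).commutes]
    rfl

theorem pullback_smoothGerm (A : Eucl n ≃L[ℝ] Eucl n) (f : smoothFunctions n) :
    pullback A (smoothGerm n f) = smoothGerm n (precomp A f) := rfl

theorem pullback_pullback_symm (A : Eucl n ≃L[ℝ] Eucl n) (e : smoothGerms n) :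
    pullback A (pullback A.symm e) = e := by
  obtain ⟨f, rfl⟩ := smoothGerm_surjective e
  rw [pullback_smoothGerm, pullback_smoothGerm]
  congr 1
  ext x
  change f (A.symm (A x)) = f x
  rw [A.symm_apply_apply]

/-- Pullback of smooth germs along a linear automorphism of `ℝ^n`, as an automorphism of `E_n`. -/
def pullbackEquiv (A : Eucl n ≃L[ℝ] Eucl n) : smoothGerms n ≃ₐ[ℝ] smoothGerms n :=
  .ofAlgHom (pullback A) (pullback A.symm) (AlgHom.ext (pullback_pullback_symm A))
    (AlgHom.ext (pullback_pullback_symm A.symm))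

theorem jacobianIdeal_comp (f : smoothFunctions n) (A : Eucl n ≃L[ℝ] Eucl n) :
    jacobianIdeal n (f ∘ A) = (jacobianIdeal n f).map (pullbackEquiv A : _ →+* _) := by
  have hpartial : (fun v ↦ smoothGerm n (dirDeriv v (precomp A f))) =
      (pullbackEquiv A ∘ fun v ↦ smoothGerm n (dirDeriv v f)) ∘ A := by
    ext v
    rw [dirDeriv_precomp]
    rfl
  change jacobianIdeal n (precomp A f) = _
  rw [jacobianIdeal_eq_span_dirDeriv, jacobianIdeal_eq_span_dirDeriv, Ideal.map_span, ← range_comp,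
    hpartial, A.surjective.range_comp]
  rfl

theorem milnor_comp (f : smoothFunctions n) (A : Eucl n ≃L[ℝ] Eucl n) :
    milnor n (f ∘ A) = milnor n f :=
  (Ideal.quotientEquivAlg _ _ (pullbackEquiv A) (jacobianIdeal_comp f A)).toLinearEquiv.rank_eq.symm

theorem milnor_eq_milnor_of_tendsto {f : smoothFunctions n} {d : ℕ} {l : Eucl n → ℝ}
    (hl : ∀ v, Tendsto (fun t : ℝ ↦ (t ^ (d + 1))⁻¹ * f (t • v)) (𝓝[>] 0) (𝓝 (l v)))
    (hfin : milnor n l < Cardinal.aleph0) : milnor n f = milnor n l := by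
  obtain ⟨p, hp, hfp, rfl⟩ := exists_isHomogeneous_sub_mem_of_tendsto hl
  rw [milnor, jacobianIdeal_polyFunction] at hfin
  rw [milnor, milnor, jacobianIdeal_polyFunction, jacobianIdeal_eq_span_single]
  refine (isRegularParameterMap_polyGerm n).rank_quotient_span_eq_of_sub_mem
    (fun _ ↦ hp.pderiv) (fun i ↦ ?_) hfin
  rw [polyGerm, AlgHom.comp_apply, ← dirDeriv_polyFunction, ← map_sub, ← map_sub]
  exact smoothGerm_dirDeriv_mem_pow _ (by rwa [map_sub])

end MilnorNumber

section Trivialization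

theorem HasOrderAt.exponent_ne_zero {F : V → W} {x : V} {α : ℝ} (h : HasOrderAt F x α)
    (hF : ContinuousAt F x) (hx : F x = 0) : α ≠ 0 := by
  rintro rfl
  obtain ⟨-, v, -, L, hL, hv⟩ := h
  simp only [Real.rpow_zero, inv_one, one_smul] at hv
  have hline : Tendsto (fun t : ℝ ↦ x + t • v) (𝓝[>] 0) (𝓝 x) :=
    tendsto_nhdsWithin_of_tendsto_nhds <| Continuous.tendsto' (by fun_prop) _ _ (by simp)
  exact hL (tendsto_nhds_unique hv (hx ▸ hF.tendsto.comp hline))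

theorem HasOrderAt.exists_tendsto {F : V → W} {x : V} {α : ℝ} (h : HasOrderAt F x α)
    (hx : F x = 0) : ∃ l : V → W, ∀ v,
      Tendsto (fun t : ℝ ↦ (t ^ α)⁻¹ • F (x + t • v)) (𝓝[>] 0) (𝓝 (l v)) := by
  have hlim : ∀ v, ∃ L, Tendsto (fun t : ℝ ↦ (t ^ α)⁻¹ • F (x + t • v)) (𝓝[>] 0) (𝓝 L) := by
    intro v
    rcases eq_or_ne v 0 with rfl | hv
    · exact ⟨0, by simp [hx]⟩
    · exact h.1 v hv
  exact Classical.axiomOfChoice hlim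

theorem comp_hasFDerivAt_eq_id {φ : V → W} {ψ : W → V} {φ' : V →L[ℝ] W} {ψ' : W →L[ℝ] V} {x : V}
    (hφ : HasFDerivAt φ φ' x) (hψ : HasFDerivAt ψ ψ' (φ x)) (h : ψ ∘ φ =ᶠ[𝓝 x] id) :
    ψ' ∘L φ' = .id ℝ V :=
  ((hψ.comp x hφ).congr_of_eventuallyEq h.symm).unique (hasFDerivAt_id x)

theorem IsCkDiffeoGermAt.exists_hasFDerivAt {n : ℕ} {k : ℕ∞} {φ : Eucl n → Eucl n}
    (h : IsCkDiffeoGermAt k φ) (hk : k ≠ 0) :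
    ∃ A : Eucl n ≃L[ℝ] Eucl n, HasFDerivAt φ (A : Eucl n →L[ℝ] Eucl n) 0 := by
  obtain ⟨hφ0, U, V, hU, hV, h0U, h0V, -, hφ, ψ, hψ, hψφ, hφψ⟩ := h
  have hψ0 : ψ 0 = 0 := by simpa [hφ0] using hψφ 0 h0U
  have dφ : HasFDerivAt φ (fderiv ℝ φ 0) 0 :=
    ((hφ.contDiffAt (hU.mem_nhds h0U)).differentiableAt (mod_cast hk)).hasFDerivAt
  have dψ : HasFDerivAt ψ (fderiv ℝ ψ 0) 0 :=
    ((hψ.contDiffAt (hV.mem_nhds h0V)).differentiableAt (mod_cast hk)).hasFDerivAt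
  have hleft : fderiv ℝ ψ 0 ∘L fderiv ℝ φ 0 = .id ℝ _ :=
    comp_hasFDerivAt_eq_id dφ (hφ0.symm ▸ dψ) (eventually_of_mem (hU.mem_nhds h0U) hψφ)
  have hright : fderiv ℝ φ 0 ∘L fderiv ℝ ψ 0 = .id ℝ _ :=
    comp_hasFDerivAt_eq_id dψ (hψ0.symm ▸ dφ) (eventually_of_mem (hV.mem_nhds h0V) hφψ)
  exact ⟨.equivOfInverse _ _ (DFunLike.congr_fun hleft) (DFunLike.congr_fun hright), dφ⟩

theorem tendsto_inv_pow_mul_comp {n m : ℕ} {f : smoothFunctions n} {l : Eucl n → ℝ}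
    (hl : ∀ v, Tendsto (fun t : ℝ ↦ (t ^ m)⁻¹ * f (t • v)) (𝓝[>] 0) (𝓝 (l v)))
    {φ : V → Eucl n} {φ' : V →L[ℝ] Eucl n} (hφ0 : φ 0 = 0) (hφ : HasFDerivAt φ φ' 0) (v : V) :
    Tendsto (fun t : ℝ ↦ (t ^ m)⁻¹ * f (φ (t • v))) (𝓝[>] 0) (𝓝 (l (φ' v))) := by
  obtain ⟨p, hp, hfp, rfl⟩ := exists_isHomogeneous_sub_mem_of_tendsto hl
  have hw : Tendsto (fun t : ℝ ↦ t⁻¹ • φ (t • v)) (𝓝[>] 0) (𝓝 (φ' v)) := by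
    simpa [hφ0] using (hφ.hasLineDerivAt v).tendsto_slope_zero_right
  refine (tendsto_inv_pow_mul_of_sub_polyGerm_mem hp hfp hw).congr' ?_
  filter_upwards [self_mem_nhdsWithin] with t ht
  rw [smul_inv_smul₀ (ne_of_gt ht)]

theorem tendsto_inv_pow_mul_comp_symm {n m : ℕ} {f : smoothFunctions n} {l : Eucl n → ℝ}
    (hl : ∀ v, Tendsto (fun t : ℝ ↦ (t ^ m)⁻¹ * f (t • v)) (𝓝[>] 0) (𝓝 (l v)))
    {φ : V → Eucl n} {A : V ≃L[ℝ] Eucl n} (hφ0 : φ 0 = 0)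
    (hφ : HasFDerivAt φ (A : V →L[ℝ] Eucl n) 0) {g : V → ℝ} (hgf : ∀ᶠ x in 𝓝 0, g x = f (φ x))
    (v : Eucl n) :
    Tendsto (fun t : ℝ ↦ (t ^ m)⁻¹ * (g ∘ A.symm) (t • v)) (𝓝[>] 0) (𝓝 (l v)) := by
  have hray : Tendsto (fun t : ℝ ↦ t • A.symm v) (𝓝[>] 0) (𝓝 0) :=
    tendsto_nhdsWithin_of_tendsto_nhds <| Continuous.tendsto' (by fun_prop) _ _ (by simp)
  have hlim := tendsto_inv_pow_mul_comp hl hφ0 hφ (A.symm v)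
  rw [ContinuousLinearEquiv.coe_coe, A.apply_symm_apply] at hlim
  refine hlim.congr' ?_
  filter_upwards [hray.eventually hgf] with t ht
  rw [Function.comp_apply, map_smul, ht]

theorem milnor_constant_of_C1_trivial_general {n m : ℕ} {f g : Eucl n → ℝ}
    (hf : ContDiff ℝ (⊤ : ℕ∞) f) (hg : ContDiff ℝ (⊤ : ℕ∞) g) (hf0 : f 0 = 0)
    {φ : Eucl n → Eucl n} {A : Eucl n ≃L[ℝ] Eucl n} (hφ0 : φ 0 = 0)
    (hφ : HasFDerivAt φ (A : Eucl n →L[ℝ] Eucl n) 0)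
    (hgf : ∀ᶠ x in 𝓝 0, g x = f (φ x)) (hord : HasOrderAt f 0 (m : ℝ))
    (hiso : milnor n (inPart f m) < Cardinal.aleph0) : milnor n g = milnor n f := by
  obtain ⟨d, rfl⟩ := Nat.exists_eq_succ_of_ne_zero <|
    Nat.cast_ne_zero.1 (hord.exponent_ne_zero hf.continuous.continuousAt hf0)
  obtain ⟨l, hl⟩ := hord.exists_tendsto hf0
  simp only [Real.rpow_natCast, zero_add, smul_eq_mul] at hl
  rw [inPart_eq_of_tendsto (hf.of_le (mod_cast le_top)) hl] at hiso
  let f' : smoothFunctions n := ⟨f, hf⟩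
  let g' : smoothFunctions n := ⟨g, hg⟩
  calc
    milnor n g = milnor n (g ∘ A.symm) := (milnor_comp g' A.symm).symm
    _ = milnor n l := milnor_eq_milnor_of_tendsto (f := precomp A.symm g')
      (tendsto_inv_pow_mul_comp_symm (f := f') hl hφ0 hφ hgf) hiso
    _ = milnor n f := (milnor_eq_milnor_of_tendsto (f := f') hl hiso).symm

end Trivialization

/-- if `{f_t}` is an `R`-`C^1` trivial family of `C^∞` germs
`(ℝ^n, 0) → (ℝ, 0)` and `f_0` has finite order with `μ(in(f_0)) < ∞`, then
`μ(f_t) = μ(f_0)` for all `t ∈ [0, 1]`. -/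
theorem milnor_constant_of_C1_trivial {n : ℕ} (f : ℝ → Eucl n → ℝ)
    (hsm : ∀ t ∈ Icc (0 : ℝ) 1, ContDiff ℝ (⊤ : ℕ∞) (f t))
    (h0 : ∀ t ∈ Icc (0 : ℝ) 1, f t 0 = 0)
    (htriv : ∀ t ∈ Icc (0 : ℝ) 1, ∃ φ : Eucl n → Eucl n, IsCkDiffeoGermAt 1 φ ∧
      ∀ᶠ x in 𝓝 (0 : Eucl n), f t x = f 0 (φ x))
    (m : ℕ) (hord : HasOrderAt (f 0) 0 (m : ℝ))
    (hiso : milnor n (inPart (f 0) m) < Cardinal.aleph0) :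
    ∀ t ∈ Icc (0 : ℝ) 1, milnor n (f t) = milnor n (f 0) := by
  intro t ht
  have hz : (0 : ℝ) ∈ Icc (0 : ℝ) 1 := left_mem_Icc.2 zero_le_one
  obtain ⟨φ, hφ, hfφ⟩ := htriv t ht
  obtain ⟨A, hA⟩ := hφ.exists_hasFDerivAt one_ne_zero
  exact milnor_constant_of_C1_trivial_general (hsm 0 hz) (hsm t ht) (h0 0 hz) hφ.1 hA hfφ hord hiso
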